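/- arXiv:1206.1531 — 2 statements merged into one kernel-verified Lean document; each statement's English description precedes it below -/
import Mathlib

section
/- Let ℓ be a fixed nonnegative integer. If P_n = Ω(n) and p_e = (ln n + ℓ·ln ln n + β_{ℓ,n})/n with β_{ℓ,n} > 0 for all n, then K_n = Ω(√(ln n)). -/
open MeasureTheory Filter Asymptotics
open scoped ENNReal

noncomputable section

/-- Key rings: `K`-element subsets of a key pool of size `P`. -/
abbrev KeyRing (P K : ℕ) : Type := {s : Finset (Fin P) // s.card = K}

instance (P K : ℕ) : MeasurableSpace (KeyRing P K) := ⊤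

/-- The uniform probability measure on key rings. -/
def uniformKeyMeasure (P K : ℕ) : Measure (KeyRing P K) :=
  (Fintype.card (KeyRing P K) : ℝ≥0∞)⁻¹ • (Measure.count : Measure (KeyRing P K))

/-- The Bernoulli measure with parameter `p` on `Bool`. -/
def bern (p : ℝ) : Measure Bool :=
  ENNReal.ofReal p • Measure.dirac true + ENNReal.ofReal (1 - p) • Measure.dirac false

/-- Sample space underlying `𝔾_on(n, K, P, p)`: independent key rings for the `n`
nodes together with independent on/off channel states for each pair of nodes. -/
abbrev GonSpace (n K P : ℕ) : Type :=
  (Fin n → KeyRing P K) × (Sym2 (Fin n) → Bool)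

/-- The probability measure of the model `𝔾_on(n, K, P, p)`: the key rings of the
`n` nodes are independent and uniform, and the channels are independent
Bernoulli(`p`) variables, independent of the key rings. -/
def gonMeasure (n K P : ℕ) (p : ℝ) : Measure (GonSpace n K P) :=
  (Measure.pi fun _ : Fin n => uniformKeyMeasure P K).prod
    (Measure.pi fun _ : Sym2 (Fin n) => bern p)

/-- The random graph `𝔾_on`: an edge is present iff the key rings intersect and the
channel between the two nodes is on. -/
def gonGraph {n K P : ℕ} (ω : GonSpace n K P) : SimpleGraph (Fin n) where
  Adj i j := i ≠ j ∧ ((ω.1 i).1 ∩ (ω.1 j).1).Nonempty ∧ ω.2 s(i, j) = true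
  symm := by
    constructor
    rintro i j ⟨h1, h2, h3⟩
    exact ⟨h1.symm, by rwa [Finset.inter_comm], by rwa [Sym2.eq_swap]⟩
  loopless := ⟨fun i h => h.1 rfl⟩

/-- The random key graph `G(n, K, P)`: an edge is present iff the key rings intersect. -/
def rkgGraph {n K P : ℕ} (ω : Fin n → KeyRing P K) : SimpleGraph (Fin n) where
  Adj i j := i ≠ j ∧ ((ω i).1 ∩ (ω j).1).Nonempty
  symm := by
    constructor
    rintro i j ⟨h1, h2⟩
    exact ⟨h1.symm, by rwa [Finset.inter_comm]⟩
  loopless := ⟨fun i h => h.1 rfl⟩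

/-- The probability measure of the random key graph model. -/
def rkgMeasure (n K P : ℕ) : Measure (Fin n → KeyRing P K) :=
  Measure.pi fun _ : Fin n => uniformKeyMeasure P K

/-- Degree of a vertex. -/
def gDeg {V : Type*} (G : SimpleGraph V) (v : V) : ℕ := Nat.card {w // G.Adj v w}

/-- Minimum vertex degree. -/
def minDeg {V : Type*} (G : SimpleGraph V) : ℕ := sInf (Set.range (gDeg G))

/-- A graph is `k`-connected if it remains connected after the removal of any
`k - 1` of its vertices. -/
def KConnected {V : Type*} (G : SimpleGraph V) (k : ℕ) : Prop :=
  ∀ S : Finset V, S.card ≤ k - 1 → (G.induce ((S : Set V)ᶜ)).Connected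

/-- Vertex connectivity: the least number of vertices whose deletion disconnects
the graph. -/
def vertexConn {V : Type*} (G : SimpleGraph V) : ℕ :=
  sInf {m | ∃ S : Finset V, S.card = m ∧ ¬ (G.induce ((S : Set V)ᶜ)).Connected}

/-- `p_s`: the probability that two key rings share at least one key. -/
def psf (K P : ℕ) : ℝ :=
  if 2 * K ≤ P then 1 - (Nat.choose (P - K) K : ℝ) / (Nat.choose P K : ℝ) else 1

/-- `p_e = p · p_s`: the probability of an edge in `𝔾_on`. -/
def pef (K P : ℕ) (p : ℝ) : ℝ := p * psf K P

/-- The event `D_{x,ℓ}` that the node with index `x` has degree exactly `ℓ`. -/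
def degEvent (n K P : ℕ) (x ℓ : ℕ) : Set (GonSpace n K P) :=
  {ω | ∃ hx : x < n, gDeg (gonGraph ω) ⟨x, hx⟩ = ℓ}

/-- The event `E_{xy}` that the edge between the nodes with indices `x`, `y` is present. -/
def edgeEvent (n K P : ℕ) (x y : ℕ) : Set (GonSpace n K P) :=
  {ω | ∃ (hx : x < n) (hy : y < n), (gonGraph ω).Adj ⟨x, hx⟩ ⟨y, hy⟩}

/-- The event that the key rings of nodes `x` and `y` share exactly `u` keys. -/
def interCardEvent (n K P : ℕ) (x y u : ℕ) : Set (GonSpace n K P) :=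
  {ω | ∃ (hx : x < n) (hy : y < n), ((ω.1 ⟨x, hx⟩).1 ∩ (ω.1 ⟨y, hy⟩).1).card = u}

/-- The event `K_{xy}` that the key rings of nodes `x` and `y` share at least one key. -/
def keyShareEvent (n K P : ℕ) (x y : ℕ) : Set (GonSpace n K P) :=
  {ω | ∃ (hx : x < n) (hy : y < n), ((ω.1 ⟨x, hx⟩).1 ∩ (ω.1 ⟨y, hy⟩).1).Nonempty}

/-- `r_n = min(⌊P/K⌋, ⌊n/2⌋)`. -/
def rn (n K P : ℕ) : ℕ := min (P / K) (n / 2)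

/-- The threshold array `J`. -/
def Jarr (n K P : ℕ) (ε lam mu : ℝ) (i : ℕ) : ℕ :=
  if i ≤ rn n K P then max ⌊(1 + ε) * (K : ℝ)⌋₊ ⌊lam * (K : ℝ) * (i : ℝ)⌋₊
  else ⌊mu * (P : ℝ)⌋₊

/-- The event `𝓔(J)`: some set `T` of at least two nodes has a union of key rings of
size at most `J_{|T|}`. -/
def EJ (n K P : ℕ) (ε lam mu : ℝ) : Set (GonSpace n K P) :=
  {ω | ∃ T : Finset (Fin n), 2 ≤ T.card ∧
    (T.biUnion fun i => (ω.1 i).1).card ≤ Jarr n K P ε lam mu T.card}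

/-!
A given set of `j` keys meets a random `K`-subset of the pool with probability at most `jK / P`,
by a union bound over the `j` keys. Hence `p_s ≤ K² / P`, and since `p ≤ 1` and `P = Ω(n)`,
the scaling forces `ln n / n = O(p_e) = O(K² / P) = O(K² / n)`, i.e. `K² = Ω(ln n)`.
-/

theorem choose_succ_le_choose_sub_add (N k j : ℕ) :
    (N + 1).choose (k + 1) ≤ (N + 1 - j).choose (k + 1) + j * N.choose k := by
  induction j with
  | zero => simp
  | succ j ih =>
    have increment_le :
        (N + 1 - j).choose (k + 1) ≤ (N - j).choose (k + 1) + N.choose k := by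
      obtain hj | hj := le_or_gt j N
      · rw [Nat.succ_sub hj, Nat.choose_succ_succ', add_comm]
        gcongr
        exact Nat.sub_le N j
      · simp [Nat.sub_eq_zero_of_le (Nat.succ_le_of_lt hj)]
    calc (N + 1).choose (k + 1)
        ≤ (N + 1 - j).choose (k + 1) + j * N.choose k := ih
      _ ≤ (N - j).choose (k + 1) + N.choose k + j * N.choose k := by gcongr
      _ = (N + 1 - (j + 1)).choose (k + 1) + (j + 1) * N.choose k := by
        rw [Nat.add_sub_add_right]; ring

theorem mul_choose_le_mul_choose_sub_add (P K j : ℕ) :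
    P * P.choose K ≤ P * (P - j).choose K + j * K * P.choose K := by
  cases K with
  | zero => simp
  | succ k =>
    cases P with
    | zero => simp
    | succ N =>
      calc (N + 1) * (N + 1).choose (k + 1)
          ≤ (N + 1) * ((N + 1 - j).choose (k + 1) + j * N.choose k) := by
            gcongr
            exact choose_succ_le_choose_sub_add N k j
        _ = (N + 1) * (N + 1 - j).choose (k + 1) + j * ((N + 1) * N.choose k) := by ring
        _ = (N + 1) * (N + 1 - j).choose (k + 1) + j * (k + 1) * (N + 1).choose (k + 1) := by
            rw [Nat.add_one_mul_choose_eq]; ring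

theorem one_sub_choose_sub_div_choose_mul_le {P K : ℕ} (hKP : K ≤ P) (j : ℕ) :
    (1 - ((P - j).choose K : ℝ) / P.choose K) * P ≤ j * K := by
  have hpos : (0 : ℝ) < P.choose K := by exact_mod_cast Nat.choose_pos hKP
  have union_bound : (P : ℝ) * P.choose K ≤ P * (P - j).choose K + j * K * P.choose K := by
    exact_mod_cast mul_choose_le_mul_choose_sub_add P K j
  rw [one_sub_div hpos.ne', div_mul_eq_mul_div, div_le_iff₀ hpos]
  linarith

theorem psf_nonneg (K P : ℕ) : 0 ≤ psf K P := by
  unfold psf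
  split_ifs
  · have choose_le : ((P - K).choose K : ℝ) ≤ P.choose K := by
      exact_mod_cast Nat.choose_le_choose K (Nat.sub_le P K)
    exact sub_nonneg.2 (div_le_one_of_le₀ choose_le (Nat.cast_nonneg _))
  · exact zero_le_one

theorem psf_mul_le_sq (K P : ℕ) : psf K P * P ≤ (K : ℝ) ^ 2 := by
  unfold psf
  split_ifs with h
  · rw [sq]
    exact one_sub_choose_sub_div_choose_mul_le (by omega) K
  · have hP : P ≤ K ^ 2 := by
      obtain rfl | hK : K = 1 ∨ 2 ≤ K := by omega
      · omega
      · nlinarith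
    rw [one_mul]
    exact_mod_cast hP

theorem isBigO_sqrt_of_isBigO_mul_pef {ι : Type*} {l : Filter ι} {K P : ι → ℕ} {p f g : ι → ℝ}
    (hp : p =O[l] fun _ => (1 : ℝ)) (hP : g =O[l] fun i => (P i : ℝ))
    (hf : f =O[l] fun i => g i * pef (K i) (P i) (p i)) :
    (fun i => √(f i)) =O[l] fun i => (K i : ℝ) := by
  have hpsf : (fun i => psf (K i) (P i) * P i) =O[l] fun i => (K i : ℝ) ^ 2 :=
    .of_norm_le fun i => by
      rw [Real.norm_of_nonneg (mul_nonneg (psf_nonneg _ _) (Nat.cast_nonneg _))]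
      exact psf_mul_le_sq (K i) (P i)
  have hsq : f =O[l] fun i => (K i : ℝ) ^ 2 := calc
    f =O[l] fun i => g i * pef (K i) (P i) (p i) := hf
    _ =O[l] fun i => (P i : ℝ) * pef (K i) (P i) (p i) := hP.mul (isBigO_refl _ _)
    _ = fun i => p i * (psf (K i) (P i) * P i) := by funext i; unfold pef; ring
    _ =O[l] fun i => 1 * (K i : ℝ) ^ 2 := hp.mul hpsf
    _ = fun i => (K i : ℝ) ^ 2 := by simp only [one_mul]
  simpa only [Real.sqrt_sq (Nat.cast_nonneg _)] using hsq.sqrt (.of_forall fun i => sq_nonneg _)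

theorem eventually_mul_log_le_log_add_mul_log_log {c : ℝ} (hc : c < 1) (a : ℝ) :
    ∀ᶠ x : ℝ in atTop, c * Real.log x ≤ Real.log x + a * Real.log (Real.log x) := by
  have hlittleO : (fun x => a * Real.log (Real.log x)) =o[atTop] Real.log :=
    (Real.isLittleO_log_id_atTop.comp_tendsto Real.tendsto_log_atTop).const_mul_left a
  filter_upwards [hlittleO.bound (sub_pos.2 hc), eventually_ge_atTop 1] with x hx hx1
  rw [Real.norm_of_nonneg (Real.log_nonneg hx1), Real.norm_eq_abs] at hx
  linarith [neg_abs_le (a * Real.log (Real.log x))]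

theorem gon_key_ring_size_lower_bound_general
    (ℓ : ℝ) (K P : ℕ → ℕ) (p : ℕ → ℝ) (hp : ∀ n, p n ∈ Set.Icc 0 1)
    (hP : ∃ c : ℝ, 0 < c ∧ ∀ᶠ n : ℕ in atTop, c * (n : ℝ) ≤ (P n : ℝ))
    (hβ : ∀ᶠ n : ℕ in atTop,
      0 ≤ (n : ℝ) * pef (K n) (P n) (p n) - Real.log n - ℓ * Real.log (Real.log n)) :
    ∃ c : ℝ, 0 < c ∧ ∀ᶠ n : ℕ in atTop, c * √(Real.log n) ≤ (K n : ℝ) := by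
  have hp_bdd : p =O[atTop] fun _ => (1 : ℝ) := .of_norm_le fun n => by
    rw [Real.norm_of_nonneg (hp n).1]
    exact (hp n).2
  have hP_bigO : (fun n : ℕ => (n : ℝ)) =O[atTop] fun n => (P n : ℝ) :=
    isBigO_iff''.2 (by simpa only [Real.norm_natCast] using hP)
  have hlog : (fun n : ℕ => Real.log n) =O[atTop] fun n => n * pef (K n) (P n) (p n) := by
    refine .of_bound 2 ?_
    filter_upwards [hβ, tendsto_natCast_atTop_atTop.eventually
      (eventually_mul_log_le_log_add_mul_log_log one_half_lt_one ℓ)] with n hβn hhalf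
    rw [Real.norm_of_nonneg (Real.log_natCast_nonneg n), Real.norm_eq_abs]
    linarith [le_abs_self ((n : ℝ) * pef (K n) (P n) (p n))]
  simpa only [Real.norm_natCast, Real.norm_of_nonneg (Real.sqrt_nonneg _)] using
    isBigO_iff''.1 (isBigO_sqrt_of_isBigO_mul_pef hp_bdd hP_bigO hlog)

/-- `K_n = Ω(√(ln n))` under the critical scaling. -/
theorem gon_key_ring_size_lower_bound
    (ℓ : ℕ) (K P : ℕ → ℕ) (p : ℕ → ℝ)
    (hKP : ∀ n, K n ≤ P n) (hp0 : ∀ n, 0 < p n) (hp1 : ∀ n, p n < 1)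
    (hP : ∃ c : ℝ, 0 < c ∧ ∀ᶠ n : ℕ in atTop, c * (n : ℝ) ≤ (P n : ℝ))
    (hβ : ∀ᶠ n : ℕ in atTop,
      0 < (n : ℝ) * pef (K n) (P n) (p n) - Real.log n -
        (ℓ : ℝ) * Real.log (Real.log n)) :
    ∃ c : ℝ, 0 < c ∧ ∀ᶠ n : ℕ in atTop, c * Real.sqrt (Real.log n) ≤ (K n : ℝ) :=
  gon_key_ring_size_lower_bound_general ℓ K P p (fun n => ⟨(hp0 n).le, (hp1 n).le⟩) hP
    (hβ.mono fun _ => le_of_lt)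
end
end

section
/- Let v_x, v_y, v_j be three distinct nodes, with key rings S_x, S_y, S_j independent and each uniformly distributed over the K_n-element subsets of a key pool of size P_n (K_n ≤ P_n), and let K_{xj} denote the event S_x ∩ S_j ≠ ∅ (similarly K_{yj}). Then: (a) P[K_{xj} ∩ K_{yj} | S_x ∩ S_y = ∅] ≤ p_s²; (b) if p_s = o(1), then for every u ∈ {0,1,…,K_n}: |P[K_{xj} ∩ K_{yj} | |S_x ∩ S_y| = u] − (u/K_n)·p_s| = O(p_s²), and, in 𝔾_on, |P[E_{xj} ∪ E_{yj} | |S_x ∩ S_y| = u] − (2·p_e − (p_n·u/K_n)·p_e)| = O(p_e²). -/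
open MeasureTheory Filter Asymptotics
open scoped ENNReal

noncomputable section

/-!
Given the rings of `x` and `y`, the ring of `j` is still uniform, so it avoids a fixed set of
`t` keys with probability `(P - t).choose K / P.choose K`. Let `h t` be the complementary
probability; then `p_s = h K`, and since the two rings cover `2 * K - u` keys,
inclusion–exclusion gives `2 * h K - h (2 * K - u)` for the probability that `j` shares a key
with both. Two properties of `h` locate this number between `u / K * p_s` and
`u / K * p_s + p_s ^ 2`: `h` is concave and nonnegative, so `h t / t` is nonincreasing, and
`1 - h (s + t) ≤ (1 - h s) * (1 - h t)`. In `𝔾_on` the channels are independent of the rings,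
so a second inclusion–exclusion gives `2 * p_e - p ^ 2 * (2 * h K - h (2 * K - u))` for the
union of the two edge events.
-/

section ConcaveSequence

variable {R : Type*} [CommRing R] [LinearOrder R] [IsStrictOrderedRing R] {f : ℕ → R}

theorem cast_mul_succ_le_of_concave (h0 : 0 ≤ f 0)
    (hf : ∀ t, f t + f (t + 2) ≤ 2 * f (t + 1)) (t : ℕ) : t * f (t + 1) ≤ (t + 1) * f t := by
  induction t with
  | zero => simpa using h0
  | succ t ih =>
    have := mul_le_mul_of_nonneg_left (hf t) (by positivity : (0 : R) ≤ t + 1)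
    push_cast
    linarith

theorem cast_mul_le_cast_mul_of_concave (h0 : 0 ≤ f 0)
    (hf : ∀ t, f t + f (t + 2) ≤ 2 * f (t + 1)) {a b : ℕ} (hab : a ≤ b) :
    a * f b ≤ b * f a := by
  induction b, hab using Nat.le_induction with
  | base => exact le_rfl
  | succ b hab ih =>
    rcases Nat.eq_zero_or_pos b with rfl | hb
    · obtain rfl : a = 0 := by omega
      simpa using h0
    · refine le_of_mul_le_mul_left ?_ (Nat.cast_pos.2 hb : (0 : R) < b)
      calc (b : R) * (a * f (b + 1)) = a * (b * f (b + 1)) := by ring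
        _ ≤ a * ((b + 1) * f b) := by
          gcongr ?_ * ?_
          exact cast_mul_succ_le_of_concave h0 hf b
        _ = (b + 1) * (a * f b) := by ring
        _ ≤ (b + 1) * (b * f a) := by gcongr
        _ = b * ((b + 1 : ℕ) * f a) := by push_cast; ring

end ConcaveSequence

section Binomial

theorem two_mul_choose_succ_le (n k : ℕ) :
    2 * (n + 1).choose k ≤ n.choose k + (n + 2).choose k := by
  cases k with
  | zero => simp
  | succ k =>
    have h₁ := Nat.choose_succ_succ' n k
    have h₂ : (n + 2).choose (k + 1) = _ := Nat.choose_succ_succ' (n + 1) k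
    have h₃ : n.choose k ≤ (n + 1).choose k := Nat.choose_le_choose k n.le_succ
    omega

theorem two_mul_choose_sub_succ_le (n k t : ℕ) :
    2 * (n - (t + 1)).choose k ≤ (n - t).choose k + (n - (t + 2)).choose k := by
  rcases le_or_gt n (t + 1) with h | h
  · have := Nat.choose_le_choose k (show n - (t + 1) ≤ n - t by omega)
    rw [show n - (t + 2) = n - (t + 1) by omega]
    omega
  · obtain ⟨m, rfl⟩ := Nat.exists_eq_add_of_le' (show t + 2 ≤ n from h)
    have := two_mul_choose_succ_le m k
    rw [show m + (t + 2) - (t + 1) = m + 1 by omega, show m + (t + 2) - t = m + 2 by omega,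
      Nat.add_sub_cancel]
    omega

theorem sub_add_mul_le_sub_mul_sub (m s t : ℕ) : (m - (s + t)) * m ≤ (m - s) * (m - t) := by
  rcases le_total m (s + t) with h | h
  · simp [Nat.sub_eq_zero_of_le h]
  · obtain ⟨a, rfl⟩ := Nat.exists_eq_add_of_le h
    rw [Nat.add_sub_cancel_left, show s + t + a - s = t + a by omega,
      show s + t + a - t = s + a by omega]
    nlinarith [Nat.zero_le (s * t)]

theorem descFactorial_sub_add_mul_le (n k s t : ℕ) :
    (n - (s + t)).descFactorial k * n.descFactorial k ≤
      (n - s).descFactorial k * (n - t).descFactorial k := by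
  simp only [Nat.descFactorial_eq_prod_range, ← Finset.prod_mul_distrib]
  refine Finset.prod_le_prod' fun i _ => ?_
  simpa only [Nat.sub_right_comm _ _ i] using sub_add_mul_le_sub_mul_sub (n - i) s t

theorem choose_sub_add_mul_le (n k s t : ℕ) :
    (n - (s + t)).choose k * n.choose k ≤ (n - s).choose k * (n - t).choose k := by
  have h := descFactorial_sub_add_mul_le n k s t
  simp only [Nat.descFactorial_eq_factorial_mul_choose] at h
  rw [mul_mul_mul_comm, mul_mul_mul_comm k.factorial ((n - s).choose k)] at h
  exact Nat.le_of_mul_le_mul_left h (by positivity)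

end Binomial

section HitProb

variable {K P : ℕ}

/-- The probability that a uniformly random `K`-subset of a pool of `P` keys meets a fixed set
of `t` keys. -/
def hitProb (K P t : ℕ) : ℝ := 1 - ((P - t).choose K : ℝ) / P.choose K

theorem psf_eq_hitProb (K P : ℕ) : psf K P = hitProb K P K := by
  unfold psf hitProb
  split_ifs with h
  · rfl
  · rw [Nat.choose_eq_zero_of_lt (by omega : P - K < K)]
    simp

theorem psf_eq_one (h : P < 2 * K) : psf K P = 1 := if_neg h.not_ge

theorem hitProb_nonneg (K P t : ℕ) : 0 ≤ hitProb K P t :=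
  sub_nonneg.2 <| div_le_one_of_le₀
    (by exact_mod_cast Nat.choose_le_choose K (Nat.sub_le P t)) (Nat.cast_nonneg _)

theorem hitProb_le_one (K P t : ℕ) : hitProb K P t ≤ 1 :=
  sub_le_self _ (by positivity)

theorem one_sub_hitProb_add_le (h : K ≤ P) (s t : ℕ) :
    1 - hitProb K P (s + t) ≤ (1 - hitProb K P s) * (1 - hitProb K P t) := by
  have hpos : (0 : ℝ) < P.choose K := by exact_mod_cast Nat.choose_pos h
  simp only [hitProb, sub_sub_cancel]
  rw [div_mul_div_comm, div_le_div_iff₀ hpos (by positivity), ← mul_assoc]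
  gcongr ?_ * _
  exact_mod_cast choose_sub_add_mul_le P K s t

theorem hitProb_concave (K P t : ℕ) :
    hitProb K P t + hitProb K P (t + 2) ≤ 2 * hitProb K P (t + 1) := by
  have h : 2 * ((P - (t + 1)).choose K / P.choose K : ℝ) ≤
      (P - t).choose K / P.choose K + (P - (t + 2)).choose K / P.choose K := by
    rw [← add_div, ← mul_div_assoc]
    gcongr
    exact_mod_cast two_mul_choose_sub_succ_le P K t
  unfold hitProb
  linarith

theorem cast_mul_hitProb_le {a b : ℕ} (hab : a ≤ b) :
    a * hitProb K P b ≤ b * hitProb K P a :=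
  cast_mul_le_cast_mul_of_concave (hitProb_nonneg K P 0) (hitProb_concave K P) hab

/-- The probability that a uniform key ring shares a key with each of two key rings having `u`
keys in common, by inclusion–exclusion. -/
def jointHitProb (K P u : ℕ) : ℝ := 2 * psf K P - hitProb K P (2 * K - u)

theorem div_mul_psf_le_jointHitProb {u : ℕ} (hu : u ≤ K) :
    u / K * psf K P ≤ jointHitProb K P u := by
  rcases Nat.eq_zero_or_pos K with rfl | hK
  · simp [jointHitProb, psf, hitProb]
  have hK' : (0 : ℝ) < K := Nat.cast_pos.2 hK
  have h := cast_mul_hitProb_le (K := K) (P := P) (show K ≤ 2 * K - u by omega)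
  rw [Nat.cast_sub (by omega), Nat.cast_mul, Nat.cast_two] at h
  rw [jointHitProb, psf_eq_hitProb, div_mul_eq_mul_div, div_le_iff₀ hK']
  linarith

theorem jointHitProb_le {u : ℕ} (hKP : K ≤ P) (hu : u ≤ K) :
    jointHitProb K P u ≤ u / K * psf K P + psf K P ^ 2 := by
  rcases Nat.eq_zero_or_pos K with rfl | hK
  · simp [jointHitProb, psf, hitProb]
  have hK' : (0 : ℝ) < K := Nat.cast_pos.2 hK
  have hunion := one_sub_hitProb_add_le hKP K (K - u)
  have hslope : (1 - u / K) * psf K P ≤ hitProb K P (K - u) := by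
    have h := cast_mul_hitProb_le (K := K) (P := P) (K.sub_le u)
    rw [one_sub_div hK'.ne', div_mul_eq_mul_div, div_le_iff₀ hK', psf_eq_hitProb,
      ← Nat.cast_sub hu, mul_comm (hitProb K P (K - u))]
    exact h
  rw [show K + (K - u) = 2 * K - u by omega, ← psf_eq_hitProb] at hunion
  have hmiss : 0 ≤ 1 - psf K P :=
    sub_nonneg.2 ((psf_eq_hitProb K P).trans_le (hitProb_le_one K P K))
  calc 2 * psf K P - hitProb K P (2 * K - u)
      ≤ psf K P - hitProb K P (K - u) * (1 - psf K P) := by linarith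
    _ ≤ psf K P - (1 - u / K) * psf K P * (1 - psf K P) := by gcongr
    _ = u / K * psf K P + psf K P ^ 2 - u / K * psf K P ^ 2 := by ring
    _ ≤ u / K * psf K P + psf K P ^ 2 := sub_le_self _ (by positivity)

theorem abs_jointHitProb_sub_le {u : ℕ} (hKP : K ≤ P) (hu : u ≤ K) :
    |jointHitProb K P u - u / K * psf K P| ≤ psf K P ^ 2 := by
  rw [abs_of_nonneg (sub_nonneg.2 (div_mul_psf_le_jointHitProb hu)), sub_le_iff_le_add']
  exact jointHitProb_le hKP hu

end HitProb

section Conditioning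

open ProbabilityTheory

theorem cond_prod_univ {α β : Type*} [MeasurableSpace α] [MeasurableSpace β] (μ : Measure α)
    [SFinite μ] (ν : Measure β) [IsProbabilityMeasure ν] (A : Set α) :
    (μ.prod ν)[|A ×ˢ Set.univ] = μ[|A].prod ν := by
  rw [ProbabilityTheory.cond, ProbabilityTheory.cond, ← Measure.prod_restrict,
    Measure.restrict_univ, Measure.prod_prod, measure_univ, mul_one, Measure.prod_smul_left]

theorem cond_real_preimage_of_indepFun {Ω α β : Type*} [MeasurableSpace Ω] [MeasurableSpace α]
    [MeasurableSpace β] {μ : Measure Ω} [IsFiniteMeasure μ] {X : Ω → α} {Y : Ω → β}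
    (hX : Measurable X) (hY : Measurable Y) (hXY : IndepFun X Y μ) {A : Set α}
    (hA : MeasurableSet A) (hμA : μ (X ⁻¹' A) ≠ 0) {Q : Set (α × β)} (hQ : MeasurableSet Q) {c : ℝ}
    (hc : ∀ a ∈ A, (μ.map Y).real (Prod.mk a ⁻¹' Q) = c) :
    μ[|X ⁻¹' A].real {ω | (X ω, Y ω) ∈ Q} = c := by
  have hinter : μ (X ⁻¹' A ∩ {ω | (X ω, Y ω) ∈ Q}) = ENNReal.ofReal c * μ (X ⁻¹' A) := by
    calc μ (X ⁻¹' A ∩ {ω | (X ω, Y ω) ∈ Q})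
        = μ.map (fun ω => (X ω, Y ω)) (Prod.fst ⁻¹' A ∩ Q) := by
          rw [Measure.map_apply (hX.prodMk hY) ((measurable_fst hA).inter hQ)]
          rfl
      _ = ∫⁻ a, μ.map Y (Prod.mk a ⁻¹' (Prod.fst ⁻¹' A ∩ Q)) ∂μ.map X := by
          rw [hXY.map_prod_eq_prod_map_map hX.aemeasurable hY.aemeasurable,
            Measure.prod_apply ((measurable_fst hA).inter hQ)]
      _ = ∫⁻ a, A.indicator (fun _ => ENNReal.ofReal c) a ∂μ.map X := by
          refine lintegral_congr fun a => ?_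
          by_cases ha : a ∈ A
          · simp [ha, ← hc a ha, Set.preimage_preimage]
          · simp [ha, Set.preimage_preimage]
      _ = ENNReal.ofReal c * μ (X ⁻¹' A) := by
          rw [lintegral_indicator_const hA, Measure.map_apply hX hA]
  obtain ⟨ω, hω⟩ := nonempty_of_measure_ne_zero hμA
  have hc0 : 0 ≤ c := hc (X ω) hω ▸ measureReal_nonneg
  rw [measureReal_def, cond_apply (hX hA), hinter, mul_left_comm,
    ENNReal.inv_mul_cancel hμA (measure_ne_top _ _), mul_one, ENNReal.toReal_ofReal hc0]

theorem cond_pi_real_of_forall_mem {ι : Type*} [Fintype ι] {α : ι → Type*}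
    [∀ i, MeasurableSpace (α i)] {μ : ∀ i, Measure (α i)} [∀ i, IsProbabilityMeasure (μ i)]
    {x y j : ι} (hxj : x ≠ j) (hyj : y ≠ j) {A : Set (α x × α y)} (hA : MeasurableSet A)
    (hμA : Measure.pi μ {ω | (ω x, ω y) ∈ A} ≠ 0) {Q : Set ((α x × α y) × α j)}
    (hQ : MeasurableSet Q) {c : ℝ} (hc : ∀ a ∈ A, (μ j).real (Prod.mk a ⁻¹' Q) = c) :
    (Measure.pi μ)[|{ω | (ω x, ω y) ∈ A}].real {ω | ((ω x, ω y), ω j) ∈ Q} = c := by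
  have hindep : iIndepFun (fun i (ω : ∀ i, α i) => ω i) (Measure.pi μ) :=
    iIndepFun_pi (X := fun _ => id) fun _ => aemeasurable_id
  refine cond_real_preimage_of_indepFun (X := fun ω : ∀ i, α i => (ω x, ω y))
    (Y := fun ω => ω j) (by fun_prop) (by fun_prop)
    (hindep.indepFun_prodMk measurable_pi_apply x y j hxj hyj) hA hμA hQ fun a ha => ?_
  rw [show (Measure.pi μ).map (fun ω => ω j) = μ j from (measurePreserving_eval μ j).map_eq,
    hc a ha]

end Conditioning

section KeyRing

variable {K P : ℕ}

/-- The key rings that contain a key of `T`. -/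
def hitting (T : Finset (Fin P)) : Set (KeyRing P K) := {s | (T ∩ s.1).Nonempty}

theorem hitting_union (S T : Finset (Fin P)) :
    (hitting (S ∪ T) : Set (KeyRing P K)) = hitting S ∪ hitting T := by
  ext s
  simp [hitting, Finset.union_inter_distrib_right]

theorem ncard_compl_hitting (T : Finset (Fin P)) :
    (hitting T : Set (KeyRing P K))ᶜ.ncard = (P - T.card).choose K := by
  have himage : Subtype.val '' (hitting T : Set (KeyRing P K))ᶜ =
      (Finset.powersetCard K Tᶜ : Set (Finset (Fin P))) := by
    ext s
    simp [hitting, Finset.subset_compl_iff_disjoint_left, Finset.disjoint_iff_inter_eq_empty]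
  rw [← Set.ncard_image_of_injective _ Subtype.val_injective, himage, Set.ncard_coe_finset,
    Finset.card_powersetCard, Finset.card_compl, Fintype.card_fin]

theorem uniformKeyMeasure_real (S : Set (KeyRing P K)) :
    (uniformKeyMeasure P K).real S = S.ncard / P.choose K := by
  have hcount : Measure.count S = (S.ncard : ℝ≥0∞) := by
    rw [Measure.count_apply .of_discrete, ← S.toFinite.cast_ncard_eq]
    rfl
  simp [measureReal_def, uniformKeyMeasure, hcount, div_eq_inv_mul]

theorem isProbabilityMeasure_uniformKeyMeasure (h : K ≤ P) :
    IsProbabilityMeasure (uniformKeyMeasure P K) := by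
  have hcard : (P.choose K : ℝ≥0∞) ≠ 0 := by exact_mod_cast (Nat.choose_pos h).ne'
  constructor
  simp [uniformKeyMeasure, ENNReal.inv_mul_cancel hcard]

theorem uniformKeyMeasure_real_hitting (h : K ≤ P) (T : Finset (Fin P)) :
    (uniformKeyMeasure P K).real (hitting T) = hitProb K P T.card := by
  have := isProbabilityMeasure_uniformKeyMeasure h
  rw [← compl_compl (hitting T), probReal_compl_eq_one_sub .of_discrete, uniformKeyMeasure_real,
    ncard_compl_hitting, hitProb]

theorem uniformKeyMeasure_real_hitting_keyRing (h : K ≤ P) (a : KeyRing P K) :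
    (uniformKeyMeasure P K).real (hitting a.1) = psf K P := by
  rw [uniformKeyMeasure_real_hitting h, a.2, psf_eq_hitProb]

theorem uniformKeyMeasure_real_hitting_inter (h : K ≤ P) (a b : KeyRing P K) :
    (uniformKeyMeasure P K).real (hitting a.1 ∩ hitting b.1) =
      jointHitProb K P (a.1 ∩ b.1).card := by
  have := isProbabilityMeasure_uniformKeyMeasure h
  have hincl := measureReal_union_add_inter (μ := uniformKeyMeasure P K) (s := hitting a.1)
    (t := hitting b.1) .of_discrete
  rw [← hitting_union, uniformKeyMeasure_real_hitting h, uniformKeyMeasure_real_hitting_keyRing h,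
    uniformKeyMeasure_real_hitting_keyRing h, Finset.card_union, a.2, b.2, ← two_mul] at hincl
  rw [jointHitProb]
  linarith

theorem exists_keyRing_card_inter_eq {u : ℕ} (hu : u ≤ K) (h : 2 * K ≤ P + u) :
    ∃ a b : KeyRing P K, (a.1 ∩ b.1).card = u := by
  obtain ⟨a, -, ha⟩ := Finset.exists_subset_card_eq (s := (Finset.univ : Finset (Fin P))) (n := K)
    (by rw [Finset.card_fin]; omega)
  obtain ⟨c, hca, hc⟩ := Finset.exists_subset_card_eq (s := a) (n := u) (by omega)
  obtain ⟨d, hda, hd⟩ := Finset.exists_subset_card_eq (s := aᶜ) (n := K - u)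
    (by rw [Finset.card_compl, Fintype.card_fin]; omega)
  have had : Disjoint a d := Finset.subset_compl_iff_disjoint_left.1 hda
  refine ⟨⟨a, ha⟩, ⟨c ∪ d, ?_⟩, ?_⟩
  · rw [Finset.card_union_of_disjoint (had.mono_left hca)]
    omega
  · rw [Finset.inter_union_distrib_left, Finset.inter_eq_right.2 hca,
      Finset.disjoint_iff_inter_eq_empty.1 had, Finset.union_empty, hc]

end KeyRing

section RandomKeyGraph

open ProbabilityTheory

variable {n K P u : ℕ} {x y j : Fin n}

theorem rkgMeasure_card_inter_ne_zero (hu : u ≤ K) (h : 2 * K ≤ P + u) (hxy : x ≠ y) :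
    rkgMeasure n K P {σ | ((σ x).1 ∩ (σ y).1).card = u} ≠ 0 := by
  have := isProbabilityMeasure_uniformKeyMeasure (show K ≤ P by omega)
  obtain ⟨a, b, hab⟩ := exists_keyRing_card_inter_eq hu h
  let σ₀ : Fin n → KeyRing P K := Function.update (fun _ => b) x a
  have hσ₀ : {σ₀} ⊆ {σ : Fin n → KeyRing P K | ((σ x).1 ∩ (σ y).1).card = u} := by
    simpa [σ₀, hxy.symm] using hab
  refine fun hnull => (?_ : rkgMeasure n K P {σ₀} ≠ 0) (measure_mono_null hσ₀ hnull)
  rw [rkgMeasure, Measure.pi_singleton]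
  exact Finset.prod_ne_zero_iff.2 fun i _ => by simp [uniformKeyMeasure]

theorem cond_rkgMeasure_real (hu : u ≤ K) (h : 2 * K ≤ P + u) (hxy : x ≠ y) (hxj : x ≠ j)
    (hyj : y ≠ j) {Q : KeyRing P K → KeyRing P K → Set (KeyRing P K)} {c : ℝ}
    (hc : ∀ a b, (a.1 ∩ b.1).card = u → (uniformKeyMeasure P K).real (Q a b) = c) :
    (rkgMeasure n K P)[|{σ | ((σ x).1 ∩ (σ y).1).card = u}].real {σ | σ j ∈ Q (σ x) (σ y)} = c := by
  have := isProbabilityMeasure_uniformKeyMeasure (show K ≤ P by omega)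
  exact cond_pi_real_of_forall_mem (μ := fun _ => uniformKeyMeasure P K) hxj hyj
    (A := {a | (a.1.1 ∩ a.2.1).card = u}) .of_discrete (rkgMeasure_card_inter_ne_zero hu h hxy)
    (Q := {z | z.2 ∈ Q z.1.1 z.1.2}) .of_discrete fun a ha => hc a.1 a.2 ha

theorem cond_rkgMeasure_real_hitting (hu : u ≤ K) (h : 2 * K ≤ P + u) (hxy : x ≠ y) (hxj : x ≠ j)
    (hyj : y ≠ j) :
    (rkgMeasure n K P)[|{σ | ((σ x).1 ∩ (σ y).1).card = u}].real
      {σ | σ j ∈ hitting (σ x).1} = psf K P :=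
  cond_rkgMeasure_real hu h hxy hxj hyj (Q := fun a _ => hitting a.1) fun a _ _ =>
    uniformKeyMeasure_real_hitting_keyRing (by omega) a

theorem cond_rkgMeasure_real_hitting_inter (hu : u ≤ K) (h : 2 * K ≤ P + u) (hxy : x ≠ y)
    (hxj : x ≠ j) (hyj : y ≠ j) :
    (rkgMeasure n K P)[|{σ | ((σ x).1 ∩ (σ y).1).card = u}].real
      ({σ | σ j ∈ hitting (σ x).1} ∩ {σ | σ j ∈ hitting (σ y).1}) = jointHitProb K P u :=
  cond_rkgMeasure_real hu h hxy hxj hyj (Q := fun a b => hitting a.1 ∩ hitting b.1)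
    fun a b hab => hab ▸ uniformKeyMeasure_real_hitting_inter (by omega) a b

end RandomKeyGraph

section Channels

variable {p : ℝ}

theorem isProbabilityMeasure_bern (h0 : 0 ≤ p) (h1 : p ≤ 1) : IsProbabilityMeasure (bern p) :=
  ⟨by simp [bern, ← ENNReal.ofReal_add h0 (sub_nonneg.2 h1)]⟩

theorem bern_pi_real_forall_on {ι : Type*} [Fintype ι] (h0 : 0 ≤ p) (h1 : p ≤ 1) (F : Finset ι) :
    (Measure.pi fun _ : ι => bern p).real {c | ∀ e ∈ F, c e = true} = p ^ F.card := by
  have := isProbabilityMeasure_bern h0 h1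
  have hpi : {c : ι → Bool | ∀ e ∈ F, c e = true} = Set.pi F fun _ => {true} := rfl
  rw [hpi, ← Measure.infinitePi_eq_pi, measureReal_def,
    Measure.infinitePi_pi _ fun _ _ => .of_discrete]
  simp [bern, h0]

theorem bern_pi_real_on {ι : Type*} [Fintype ι] (h0 : 0 ≤ p) (h1 : p ≤ 1) (e : ι) :
    (Measure.pi fun _ : ι => bern p).real {c | c e = true} = p := by
  simpa using bern_pi_real_forall_on h0 h1 {e}

theorem bern_pi_real_on_inter {ι : Type*} [Fintype ι] (h0 : 0 ≤ p) (h1 : p ≤ 1) {e f : ι}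
    (hef : e ≠ f) :
    (Measure.pi fun _ : ι => bern p).real ({c | c e = true} ∩ {c | c f = true}) = p ^ 2 := by
  classical
  simpa [Finset.card_pair hef, Set.ofPred_and] using bern_pi_real_forall_on h0 h1 {e, f}

end Channels

section Gon

open ProbabilityTheory

variable {n K P u : ℕ} {p : ℝ} {x y j : Fin n}

theorem interCardEvent_comm (n K P x y u : ℕ) :
    interCardEvent n K P x y u = interCardEvent n K P y x u := by
  ext ω
  simp only [interCardEvent, Set.mem_ofPred_eq, Finset.inter_comm]
  exact exists_comm

theorem interCardEvent_eq_prod : interCardEvent n K P x y u =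
    {σ | ((σ x).1 ∩ (σ y).1).card = u} ×ˢ Set.univ := by
  ext ω
  simp [interCardEvent]

theorem keyShareEvent_eq_prod : keyShareEvent n K P x j =
    {σ | σ j ∈ hitting (σ x).1} ×ˢ Set.univ := by
  ext ω
  simp [keyShareEvent, hitting]

theorem edgeEvent_eq_prod (hxj : x ≠ j) : edgeEvent n K P x j =
    {σ | σ j ∈ hitting (σ x).1} ×ˢ {c | c s(x, j) = true} := by
  ext ω
  simp [edgeEvent, gonGraph, hitting, hxj]

theorem cond_gonMeasure_interCardEvent (hKP : K ≤ P) (h0 : 0 ≤ p) (h1 : p ≤ 1) :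
    (gonMeasure n K P p)[|interCardEvent n K P x y u] =
      (rkgMeasure n K P)[|{σ | ((σ x).1 ∩ (σ y).1).card = u}].prod
        (Measure.pi fun _ => bern p) := by
  have := isProbabilityMeasure_uniformKeyMeasure hKP
  have := isProbabilityMeasure_bern h0 h1
  rw [interCardEvent_eq_prod]
  exact cond_prod_univ _ _ _

theorem cond_interCardEvent_real_keyShareEvent_inter (h0 : 0 ≤ p) (h1 : p ≤ 1) (hu : u ≤ K)
    (h : 2 * K ≤ P + u) (hxy : x ≠ y) (hxj : x ≠ j) (hyj : y ≠ j) :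
    (gonMeasure n K P p)[|interCardEvent n K P x y u].real
      (keyShareEvent n K P x j ∩ keyShareEvent n K P y j) = jointHitProb K P u := by
  have := isProbabilityMeasure_bern h0 h1
  rw [cond_gonMeasure_interCardEvent (by omega) h0 h1, keyShareEvent_eq_prod,
    keyShareEvent_eq_prod, Set.prod_inter_prod, Set.univ_inter, measureReal_prod_prod,
    probReal_univ, mul_one, cond_rkgMeasure_real_hitting_inter hu h hxy hxj hyj]

theorem cond_interCardEvent_real_edgeEvent (h0 : 0 ≤ p) (h1 : p ≤ 1) (hu : u ≤ K)
    (h : 2 * K ≤ P + u) (hxy : x ≠ y) (hxj : x ≠ j) (hyj : y ≠ j) :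
    (gonMeasure n K P p)[|interCardEvent n K P x y u].real (edgeEvent n K P x j) =
      pef K P p := by
  rw [cond_gonMeasure_interCardEvent (by omega) h0 h1, edgeEvent_eq_prod hxj,
    measureReal_prod_prod, cond_rkgMeasure_real_hitting hu h hxy hxj hyj,
    bern_pi_real_on h0 h1, pef, mul_comm]

theorem cond_interCardEvent_real_edgeEvent_inter (h0 : 0 ≤ p) (h1 : p ≤ 1) (hu : u ≤ K)
    (h : 2 * K ≤ P + u) (hxy : x ≠ y) (hxj : x ≠ j) (hyj : y ≠ j) :
    (gonMeasure n K P p)[|interCardEvent n K P x y u].real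
      (edgeEvent n K P x j ∩ edgeEvent n K P y j) = p ^ 2 * jointHitProb K P u := by
  have hne : s(x, j) ≠ s(y, j) := by simp [hxy, hxj]
  rw [cond_gonMeasure_interCardEvent (by omega) h0 h1, edgeEvent_eq_prod hxj,
    edgeEvent_eq_prod hyj, Set.prod_inter_prod, measureReal_prod_prod,
    cond_rkgMeasure_real_hitting_inter hu h hxy hxj hyj, bern_pi_real_on_inter h0 h1 hne, mul_comm]

theorem cond_interCardEvent_real_edgeEvent_union (h0 : 0 ≤ p) (h1 : p ≤ 1) (hu : u ≤ K)
    (h : 2 * K ≤ P + u) (hxy : x ≠ y) (hxj : x ≠ j) (hyj : y ≠ j) :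
    (gonMeasure n K P p)[|interCardEvent n K P x y u].real
      (edgeEvent n K P x j ∪ edgeEvent n K P y j) =
        2 * pef K P p - p ^ 2 * jointHitProb K P u := by
  have hy := cond_interCardEvent_real_edgeEvent h0 h1 hu h hxy.symm hyj hxj
  rw [interCardEvent_comm] at hy
  have hincl := measureReal_union_add_inter
    (μ := (gonMeasure n K P p)[|interCardEvent n K P x y u])
    (s := edgeEvent n K P x j) (t := edgeEvent n K P y j) .of_discrete
  rw [cond_interCardEvent_real_edgeEvent_inter h0 h1 hu h hxy hxj hyj,
    cond_interCardEvent_real_edgeEvent h0 h1 hu h hxy hxj hyj, hy] at hincl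
  linarith

theorem abs_cond_keyShareEvent_inter_sub_le (h0 : 0 ≤ p) (h1 : p ≤ 1) (hu : u ≤ K)
    (h : 2 * K ≤ P + u) (hxy : x ≠ y) (hxj : x ≠ j) (hyj : y ≠ j) :
    |(gonMeasure n K P p)[|interCardEvent n K P x y u].real
        (keyShareEvent n K P x j ∩ keyShareEvent n K P y j) - u / K * psf K P| ≤ psf K P ^ 2 := by
  rw [cond_interCardEvent_real_keyShareEvent_inter h0 h1 hu h hxy hxj hyj]
  exact abs_jointHitProb_sub_le (by omega) hu

theorem abs_cond_edgeEvent_union_sub_le (h0 : 0 ≤ p) (h1 : p ≤ 1) (hu : u ≤ K)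
    (h : 2 * K ≤ P + u) (hxy : x ≠ y) (hxj : x ≠ j) (hyj : y ≠ j) :
    |(gonMeasure n K P p)[|interCardEvent n K P x y u].real
        (edgeEvent n K P x j ∪ edgeEvent n K P y j) -
      (2 * pef K P p - p * u / K * pef K P p)| ≤ pef K P p ^ 2 := by
  rw [cond_interCardEvent_real_edgeEvent_union h0 h1 hu h hxy hxj hyj]
  calc |2 * pef K P p - p ^ 2 * jointHitProb K P u - (2 * pef K P p - p * u / K * pef K P p)|
      = |-(p ^ 2 * (jointHitProb K P u - u / K * psf K P))| := by rw [pef]; ring_nf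
    _ = p ^ 2 * |jointHitProb K P u - u / K * psf K P| := by
      rw [abs_neg, abs_mul, abs_of_nonneg (sq_nonneg p)]
    _ ≤ p ^ 2 * psf K P ^ 2 := by
      gcongr
      exact abs_jointHitProb_sub_le (by omega) hu
    _ = pef K P p ^ 2 := (mul_pow _ _ _).symm

theorem cond_disjoint_both_keyShare_le (h0 : 0 ≤ p) (h1 : p ≤ 1) (hxy : x ≠ y) (hxj : x ≠ j)
    (hyj : y ≠ j) :
    (gonMeasure n K P p)[|{ω | (ω.1 x).1 ∩ (ω.1 y).1 = ∅}]
        {ω | ((ω.1 x).1 ∩ (ω.1 j).1).Nonempty ∧ ((ω.1 y).1 ∩ (ω.1 j).1).Nonempty} ≤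
      ENNReal.ofReal (psf K P ^ 2) := by
  rcases le_or_gt (2 * K) P with hKP | hKP
  · have hdisj : {ω : GonSpace n K P | (ω.1 x).1 ∩ (ω.1 y).1 = ∅} = interCardEvent n K P x y 0 := by
      simp [interCardEvent]
    have hboth : {ω : GonSpace n K P | ((ω.1 x).1 ∩ (ω.1 j).1).Nonempty ∧
        ((ω.1 y).1 ∩ (ω.1 j).1).Nonempty} = keyShareEvent n K P x j ∩ keyShareEvent n K P y j := by
      simp [keyShareEvent, Set.ofPred_and]
    rw [hdisj, hboth, ← ofReal_measureReal,
      cond_interCardEvent_real_keyShareEvent_inter h0 h1 K.zero_le hKP hxy hxj hyj]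
    refine ENNReal.ofReal_le_ofReal ?_
    simpa using jointHitProb_le (u := 0) (show K ≤ P by omega) K.zero_le
  · simpa [psf_eq_one hKP] using prob_le_one

end Gon

/-- The condition `2 * K n ≤ P n + u n` says that the pool contains two key rings with exactly
`u n` common keys, so that the event conditioned on has positive probability. -/
theorem gon_conditional_key_share_estimates_general :
    (∀ (n K P : ℕ) (p : ℝ), K ≤ P → 0 ≤ p → p ≤ 1 →
      ∀ x y j : Fin n, x ≠ y → x ≠ j → y ≠ j →
        ProbabilityTheory.cond (gonMeasure n K P p)
            {ω | (ω.1 x).1 ∩ (ω.1 y).1 = ∅}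
            {ω | ((ω.1 x).1 ∩ (ω.1 j).1).Nonempty ∧ ((ω.1 y).1 ∩ (ω.1 j).1).Nonempty} ≤
          ENNReal.ofReal (psf K P ^ 2)) ∧
    (∀ (K P : ℕ → ℕ) (p : ℕ → ℝ),
      (∀ n, 0 ≤ p n) → (∀ n, p n ≤ 1) →
      ∀ (u : ℕ → ℕ), (∀ n, u n ≤ K n) → (∀ᶠ n in atTop, 2 * K n ≤ P n + u n) →
      ∀ x y j : ℕ, x ≠ y → x ≠ j → y ≠ j →
        ((fun n : ℕ =>
            (ProbabilityTheory.cond (gonMeasure n (K n) (P n) (p n))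
                (interCardEvent n (K n) (P n) x y (u n))
                (keyShareEvent n (K n) (P n) x j ∩
                  keyShareEvent n (K n) (P n) y j)).toReal -
              ((u n : ℝ) / (K n : ℝ)) * psf (K n) (P n)) =O[atTop]
          fun n : ℕ => psf (K n) (P n) ^ 2) ∧
        ((fun n : ℕ =>
            (ProbabilityTheory.cond (gonMeasure n (K n) (P n) (p n))
                (interCardEvent n (K n) (P n) x y (u n))
                (edgeEvent n (K n) (P n) x j ∪ edgeEvent n (K n) (P n) y j)).toReal -
              (2 * pef (K n) (P n) (p n) -
                (p n * (u n : ℝ) / (K n : ℝ)) * pef (K n) (P n) (p n))) =O[atTop]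
          fun n : ℕ => pef (K n) (P n) (p n) ^ 2)) := by
  refine ⟨fun n K P p _ h0 h1 x y j hxy hxj hyj => cond_disjoint_both_keyShare_le h0 h1 hxy hxj hyj,
    fun K P p h0 h1 u hu h x y j hxy hxj hyj => ⟨Eventually.isBigO ?_, Eventually.isBigO ?_⟩⟩ <;>
    filter_upwards [h, eventually_gt_atTop x, eventually_gt_atTop y, eventually_gt_atTop j]
      with n hn hx hy hj <;>
    lift x to Fin n using hx <;> lift y to Fin n using hy <;> lift j to Fin n using hj <;>
    rw [Ne, Fin.val_inj] at hxy hxj hyj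
  · exact abs_cond_keyShareEvent_inter_sub_le (h0 n) (h1 n) (hu n) hn hxy hxj hyj
  · exact abs_cond_edgeEvent_union_sub_le (h0 n) (h1 n) (hu n) hn hxy hxj hyj

theorem eventually_two_mul_le_of_tendsto_psf {ι : Type*} {l : Filter ι} {K P : ι → ℕ}
    (h : Tendsto (fun i => psf (K i) (P i)) l (nhds 0)) : ∀ᶠ i in l, 2 * K i ≤ P i := by
  filter_upwards [h.eventually_lt_const one_pos] with i hi
  by_contra! hKP
  exact hi.ne (psf_eq_one hKP)

/-- conditional probabilities of shared-key and edge events given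
the overlap of the key rings of `x` and `y`. -/
theorem gon_conditional_key_share_estimates :
    -- (a): for any fixed `n`, conditioning on disjoint key rings of `x` and `y`
    (∀ (n K P : ℕ) (p : ℝ), K ≤ P → 0 < p → p < 1 →
      ∀ x y j : Fin n, x ≠ y → x ≠ j → y ≠ j →
        ProbabilityTheory.cond (gonMeasure n K P p)
            {ω | (ω.1 x).1 ∩ (ω.1 y).1 = ∅}
            {ω | ((ω.1 x).1 ∩ (ω.1 j).1).Nonempty ∧ ((ω.1 y).1 ∩ (ω.1 j).1).Nonempty} ≤
          ENNReal.ofReal (psf K P ^ 2)) ∧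
    -- (b): asymptotic estimates, conditioning on `|S_x ∩ S_y| = u`
    (∀ (K P : ℕ → ℕ) (p : ℕ → ℝ),
      (∀ n, K n ≤ P n) → (∀ n, 0 < p n) → (∀ n, p n < 1) →
      Tendsto (fun n : ℕ => psf (K n) (P n)) atTop (nhds 0) →
      ∀ (u : ℕ → ℕ), (∀ n, u n ≤ K n) →
      ∀ x y j : ℕ, x ≠ y → x ≠ j → y ≠ j →
        ((fun n : ℕ =>
            (ProbabilityTheory.cond (gonMeasure n (K n) (P n) (p n))
                (interCardEvent n (K n) (P n) x y (u n))
                (keyShareEvent n (K n) (P n) x j ∩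
                  keyShareEvent n (K n) (P n) y j)).toReal -
              ((u n : ℝ) / (K n : ℝ)) * psf (K n) (P n)) =O[atTop]
          fun n : ℕ => psf (K n) (P n) ^ 2) ∧
        ((fun n : ℕ =>
            (ProbabilityTheory.cond (gonMeasure n (K n) (P n) (p n))
                (interCardEvent n (K n) (P n) x y (u n))
                (edgeEvent n (K n) (P n) x j ∪ edgeEvent n (K n) (P n) y j)).toReal -
              (2 * pef (K n) (P n) (p n) -
                (p n * (u n : ℝ) / (K n : ℝ)) * pef (K n) (P n) (p n))) =O[atTop]
          fun n : ℕ => pef (K n) (P n) (p n) ^ 2)) :=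
  ⟨fun n K P p hKP h0 h1 =>
      gon_conditional_key_share_estimates_general.1 n K P p hKP h0.le h1.le,
    fun K P p _ h0 h1 hps u hu =>
      gon_conditional_key_share_estimates_general.2 K P p (fun n => (h0 n).le) (fun n => (h1 n).le)
        u hu ((eventually_two_mul_le_of_tendsto_psf hps).mono fun _ => Nat.le_add_right_of_le)⟩
end
end
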